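/- arXiv:1110.3265 — 2 statements merged into one kernel-verified Lean document; each statement's English description precedes it below -/
import Mathlib

section
/- Let X = (X_1,…,X_k) follow the multinomial distribution M_k(n,π) with dispersion matrix Σ, and let g : ℕ^k → ℝ be any real function defined on the support of X. Then Var g(X) ≤ E[ w(X) · ∇g(X)ᵀ Σ ∇g(X) ], where w is the multinomial w-function and ∇g(x) = (Δ_1 g(x),…,Δ_k g(x))ᵀ is the vector of forward differences. -/
/-!
A multinomial vector is a sum of `n` independent steps `e_J`, where `J` takes the value `i` with
probability `π i` and, with the remaining probability `1 - ∑ π`, the step is `0`. Let `T` be the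
transition operator of this walk, `T g (x) = E[g (x + e_J)]`. Then `E[g X] = Tⁿ g (0)` for
`X ~ M_k(n, π)` (`hasSum_multPMF`, by conditioning on the last step), and since
`p_n(x) w(x) = p_{n-1}(x)` and `vᵀ Σ v = n Var v_J`, the right-hand side of the bound is
`n Tⁿ⁻¹ (V g) (0)`, where `V g = T (g²) - (T g)²` is the one-step variance; for `n = 0` both sides
of the bound vanish.

The bound is therefore the Efron–Stein inequality
`Tⁿ (g²) - (Tⁿ g)² ≤ n Tⁿ⁻¹ (V g)` (`stepOp_efronStein`). It follows by induction on `n` from the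
decomposition `Tⁿ⁺¹ (g²) - (Tⁿ⁺¹ g)² = Tⁿ (V g) + [Tⁿ ((T g)²) - (Tⁿ (T g))²]` and the
commutation inequality `V (T g) ≤ T (V g)` (`stepVar_stepOp_le`), which is Jensen's inequality
applied to the differences of `g`.
-/

open scoped BigOperators

/-- The p.m.f. of the multinomial distribution `M_k(n, π)` on `ℕ^k`. -/
noncomputable def multPMF (k n : ℕ) (π : Fin k → ℝ) (x : Fin k → ℕ) : ℝ :=
  if ∑ i, x i ≤ n then
    (Nat.factorial n : ℝ) /
        ((∏ i, (Nat.factorial (x i) : ℝ)) * (Nat.factorial (n - ∑ i, x i) : ℝ)) *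
      (∏ i, π i ^ x i) * (1 - ∑ i, π i) ^ (n - ∑ i, x i)
  else 0

/-- The multinomial `w`-function. -/
noncomputable def multW (k n : ℕ) (π : Fin k → ℝ) (x : Fin k → ℕ) : ℝ :=
  if n = 0 then 0 else ((n : ℝ) - ∑ i, (x i : ℝ)) / ((n : ℝ) * (1 - ∑ i, π i))

/-- The dispersion (covariance) matrix of the multinomial distribution. -/
noncomputable def multSigma (k n : ℕ) (π : Fin k → ℝ) (i j : Fin k) : ℝ :=
  if i = j then (n : ℝ) * π i * (1 - π i) else -((n : ℝ) * π i * π j)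

/-- Forward difference `Δ_i g (x) = g (x + e_i) - g x`. -/
def fd {k : ℕ} (g : (Fin k → ℕ) → ℝ) (i : Fin k) (x : Fin k → ℕ) : ℝ :=
  g (Function.update x i (x i + 1)) - g x

/-- Quadratic form `vᵀ S v`. -/
def quadForm {k : ℕ} (S : Fin k → Fin k → ℝ) (v : Fin k → ℝ) : ℝ :=
  ∑ i, ∑ j, v i * S i j * v j

/-! ### Efron–Stein inequality for a random walk -/

section RandomWalk

variable {ι M : Type*} [Fintype ι] [AddCommMonoid M]

/-- Transition operator of the random walk on `M` that moves by `s i` with probability `q i`. -/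
def stepOp (q : ι → ℝ) (s : ι → M) (g : M → ℝ) (x : M) : ℝ := ∑ i, q i * g (x + s i)

/-- Variance of `g` after one step of the walk started at `x`, when `q` is a probability vector. -/
def stepVar (q : ι → ℝ) (s : ι → M) (g : M → ℝ) (x : M) : ℝ :=
  stepOp q s (fun y => g y ^ 2) x - stepOp q s g x ^ 2

variable {q : ι → ℝ} {s : ι → M}

/-- A variance is half the mean squared difference of two independent copies. -/
lemma stepVar_eq (hq1 : ∑ i, q i = 1) (g : M → ℝ) (x : M) :
    stepVar q s g x = 1 / 2 * ∑ i, ∑ l, q i * q l * (g (x + s i) - g (x + s l)) ^ 2 := by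
  have h1 : ∀ i l, q i * q l * (g (x + s i) - g (x + s l)) ^ 2 =
      (q i * g (x + s i) ^ 2) * q l + q i * (q l * g (x + s l) ^ 2)
        - 2 * ((q i * g (x + s i)) * (q l * g (x + s l))) := fun i l => by ring
  simp only [h1, Finset.sum_sub_distrib, Finset.sum_add_distrib, ← Finset.mul_sum,
    ← Finset.sum_mul, hq1, stepVar, stepOp]
  ring

lemma stepOp_sq_le (hq : ∀ i, 0 ≤ q i) (hq1 : ∑ i, q i = 1) (g : M → ℝ) (x : M) :
    stepOp q s g x ^ 2 ≤ stepOp q s (fun y => g y ^ 2) x :=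
  Real.pow_arith_mean_le_arith_mean_pow_of_even Finset.univ q (fun i => g (x + s i))
    (fun i _ => hq i) hq1 even_two

lemma stepVar_stepOp_le (hq : ∀ i, 0 ≤ q i) (hq1 : ∑ i, q i = 1) (g : M → ℝ) (x : M) :
    stepVar q s (stepOp q s g) x ≤ stepOp q s (stepVar q s g) x := by
  have hR : stepOp q s (stepVar q s g) x = 1 / 2 * ∑ i, ∑ l, q i * q l *
      stepOp q s (fun y => (g (y + s i) - g (y + s l)) ^ 2) x := by
    unfold stepOp
    simp only [stepVar_eq hq1, Finset.mul_sum]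
    rw [Finset.sum_comm]
    refine Finset.sum_congr rfl fun i _ => ?_
    rw [Finset.sum_comm]
    refine Finset.sum_congr rfl fun l _ => Finset.sum_congr rfl fun j _ => ?_
    ring
  rw [hR, stepVar_eq hq1]
  refine mul_le_mul_of_nonneg_left ?_ (by norm_num)
  refine Finset.sum_le_sum fun i _ => Finset.sum_le_sum fun l _ => ?_
  refine mul_le_mul_of_nonneg_left ?_ (mul_nonneg (hq i) (hq l))
  -- Steps commute, so the difference of `T g` is `T` of the difference of `g`.
  have hD : stepOp q s g (x + s i) - stepOp q s g (x + s l) =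
      stepOp q s (fun y => g (y + s i) - g (y + s l)) x := by
    simp only [stepOp, mul_sub, Finset.sum_sub_distrib, add_right_comm x]
  rw [hD]
  exact stepOp_sq_le hq hq1 _ x

lemma stepOp_iterate_mono (hq : ∀ i, 0 ≤ q i) (n : ℕ) :
    Monotone ((stepOp q s)^[n]) := by
  refine Monotone.iterate ?_ n
  intro g h hgh x
  exact Finset.sum_le_sum fun i _ => mul_le_mul_of_nonneg_left (hgh (x + s i)) (hq i)

lemma stepOp_add (g h : M → ℝ) : stepOp q s (g + h) = stepOp q s g + stepOp q s h := by
  funext x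
  simp [stepOp, mul_add, Finset.sum_add_distrib]

lemma stepOp_iterate_add (n : ℕ) (g h : M → ℝ) :
    (stepOp q s)^[n] (g + h) = (stepOp q s)^[n] g + (stepOp q s)^[n] h := by
  induction n generalizing g h with
  | zero => rfl
  | succ n ih => simp only [Function.iterate_succ_apply, stepOp_add, ih]

lemma stepOp_iterate_one (hq1 : ∑ i, q i = 1) (n : ℕ) :
    (stepOp q s)^[n] (fun _ => 1) = fun _ => 1 :=
  Function.iterate_fixed (by funext x; simp [stepOp, hq1]) n

/-- The Efron–Stein inequality for a function of the position after `n` steps. -/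
lemma stepOp_efronStein (hq : ∀ i, 0 ≤ q i) (hq1 : ∑ i, q i = 1) (n : ℕ) (g : M → ℝ) (x : M) :
    (stepOp q s)^[n] (fun y => g y ^ 2) x - (stepOp q s)^[n] g x ^ 2
      ≤ n * (stepOp q s)^[n - 1] (stepVar q s g) x := by
  induction n generalizing g with
  | zero => simp
  | succ n ih =>
    have h1 : stepOp q s (fun y => g y ^ 2) =
        stepVar q s g + fun y => stepOp q s g y ^ 2 := by
      funext y; simp [stepVar]
    have h2 : (n : ℝ) * (stepOp q s)^[n - 1] (stepVar q s (stepOp q s g)) x ≤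
        n * (stepOp q s)^[n] (stepVar q s g) x := by
      cases n with
      | zero => simp
      | succ m =>
        refine mul_le_mul_of_nonneg_left ?_ (Nat.cast_nonneg _)
        exact stepOp_iterate_mono hq m (stepVar_stepOp_le hq hq1 g) x
    have h3 := ih (stepOp q s g)
    rw [Function.iterate_succ_apply, Function.iterate_succ_apply, h1, stepOp_iterate_add]
    simp only [Pi.add_apply, Nat.add_sub_cancel, Nat.cast_add, Nat.cast_one]
    linarith

end RandomWalk

/-! ### The multinomial distribution as a random walk -/

section Multinomial

variable {k : ℕ}

/-- Law of one multinomial step; `none` is the category with the leftover probability. -/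
def multStepProb (π : Fin k → ℝ) (o : Option (Fin k)) : ℝ := o.elim (1 - ∑ i, π i) π

/-- Displacement of one multinomial step: `e_i` for `some i` and `0` for `none`. -/
def multStep (o : Option (Fin k)) : Fin k → ℕ := o.elim 0 fun i => Pi.single i 1

/-- One step of the walk whose position after `n` steps from `0` has law `M_k(n, π)`. -/
abbrev multOp (π : Fin k → ℝ) : ((Fin k → ℕ) → ℝ) → (Fin k → ℕ) → ℝ :=
  stepOp (multStepProb π) multStep

lemma multOp_apply (π : Fin k → ℝ) (g : (Fin k → ℕ) → ℝ) (x : Fin k → ℕ) :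
    multOp π g x = (1 - ∑ i, π i) * g x + ∑ i, π i * g (x + Pi.single i 1) := by
  simp [multOp, stepOp, Fintype.sum_option, multStepProb, multStep]

lemma sum_add_single (x : Fin k → ℕ) (i : Fin k) :
    ∑ j, (x + Pi.single i 1 : Fin k → ℕ) j = ∑ j, x j + 1 := by
  simp [Finset.sum_add_distrib]

lemma multPMF_finite_support (n : ℕ) (π : Fin k → ℝ) :
    (Function.support (multPMF k n π)).Finite := by
  refine (Set.finite_Iic (fun _ : Fin k => n)).subset fun x hx i => ?_
  by_contra h
  refine hx (if_neg fun hs => h ?_)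
  exact (Finset.single_le_sum (fun _ _ => Nat.zero_le _) (Finset.mem_univ i)).trans hs

lemma summable_multPMF_mul (n : ℕ) (π : Fin k → ℝ) (g : (Fin k → ℕ) → ℝ) :
    Summable fun x => multPMF k n π x * g x :=
  summable_of_hasFiniteSupport ((multPMF_finite_support n π).subset
    (Function.support_mul_subset_left _ _))

/-- By exchangeability, given `X = x` after `n + 1` steps the last step lands in the leftover category
with probability `(n + 1 - ∑ x) / (n + 1)`. -/
lemma multPMF_succ_none (n : ℕ) (π : Fin k → ℝ) (x : Fin k → ℕ) :
    multPMF k (n + 1) π x * ((n : ℝ) + 1 - ∑ i, (x i : ℝ)) =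
      (n + 1) * ((1 - ∑ i, π i) * multPMF k n π x) := by
  unfold multPMF
  rw [← Nat.cast_sum]
  generalize hS : ∑ i, x i = S
  rcases lt_trichotomy S (n + 1) with h | h | h
  · obtain ⟨d, rfl⟩ := Nat.exists_eq_add_of_le (Nat.lt_succ_iff.1 h)
    have e : S + d + 1 - S = d + 1 := by omega
    rw [if_pos h.le, if_pos (by omega), e, Nat.add_sub_cancel_left, Nat.factorial_succ (S + d),
      Nat.factorial_succ d]
    have : ∏ i, ((x i).factorial : ℝ) ≠ 0 :=
      Finset.prod_ne_zero_iff.2 fun i _ => by positivity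
    push_cast
    field_simp
    ring
  · subst h
    simp
  · simp [not_le.2 h, not_le.2 ((Nat.lt_succ_self n).trans h)]

/-- By exchangeability, given `X = x + e_i` after `n + 1` steps the last step lands in category `i`
with probability `(x i + 1) / (n + 1)`. -/
lemma multPMF_succ_some (n : ℕ) (π : Fin k → ℝ) (i : Fin k) (x : Fin k → ℕ) :
    multPMF k (n + 1) π (x + Pi.single i 1) * ((x i : ℝ) + 1) =
      (n + 1) * (π i * multPMF k n π x) := by
  unfold multPMF
  rw [sum_add_single]
  by_cases h : ∑ j, x j ≤ n
  · have hf : ∏ j, (((x + Pi.single i 1 : Fin k → ℕ) j).factorial : ℝ) =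
        (x i + 1) * ∏ j, ((x j).factorial : ℝ) := by
      rw [← Finset.mul_prod_erase _ _ (Finset.mem_univ i),
        ← Finset.mul_prod_erase _ (fun j => ((x j).factorial : ℝ)) (Finset.mem_univ i),
        Finset.prod_congr rfl (g := fun j => ((x j).factorial : ℝ)) fun j hj => by
          simp [Finset.ne_of_mem_erase hj]]
      simp [Nat.factorial_succ, mul_assoc]
    have hp : ∏ j, π j ^ (x + Pi.single i 1 : Fin k → ℕ) j = π i * ∏ j, π j ^ x j := by
      simp only [Pi.add_apply, pow_add, Finset.prod_mul_distrib]
      rw [mul_comm, Finset.prod_eq_single i]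
      · simp
      · intro j _ hj; simp [hj]
      · simp
    rw [if_pos h, if_pos (by omega), hf, hp, Nat.factorial_succ, Nat.add_sub_add_right]
    have : ∏ i, ((x i).factorial : ℝ) ≠ 0 :=
      Finset.prod_ne_zero_iff.2 fun i _ => by positivity
    push_cast
    field_simp
  · simp [h]

/-- The law of total expectation over the last step. -/
lemma hasSum_multPMF_succ (n : ℕ) (π : Fin k → ℝ) (g : (Fin k → ℕ) → ℝ) {a : ℝ}
    (h : HasSum (fun x => multPMF k n π x * multOp π g x) a) :
    HasSum (fun x => multPMF k (n + 1) π x * g x) a := by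
  have hn : (n : ℝ) + 1 ≠ 0 := by positivity
  -- The part of `p_{n+1} g` in which the last step landed in category `i`.
  have hi : ∀ i, HasSum (fun x => multPMF k (n + 1) π x * (x i / (n + 1)) * g x)
      (∑' x, multPMF k n π x * (π i * g (x + Pi.single i 1))) := by
    intro i
    rw [← Function.Injective.hasSum_iff (add_left_injective (Pi.single i 1 : Fin k → ℕ))]
    · convert (summable_multPMF_mul n π fun x => π i * g (x + Pi.single i 1)).hasSum using 1
      funext x
      have := multPMF_succ_some n π i x
      simp only [Function.comp_apply, Pi.add_apply, Pi.single_eq_same, Nat.cast_add, Nat.cast_one]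
      field_simp
      linear_combination g (x + Pi.single i 1) * this
    · intro x hx
      have : x i = 0 := by
        by_contra h0
        refine hx ⟨x - Pi.single i 1, tsub_add_cancel_of_le fun j => ?_⟩
        rcases eq_or_ne j i with rfl | hj
        · simpa using Nat.one_le_iff_ne_zero.2 h0
        · simp [hj]
      simp [this]
  have h0 := (summable_multPMF_mul n π fun x => (1 - ∑ i, π i) * g x).hasSum
  have hsum := h0.add (hasSum_sum (s := Finset.univ) fun i _ => hi i)
  have ha : a = (∑' x, multPMF k n π x * ((1 - ∑ i, π i) * g x)) +
      ∑ i, ∑' x, multPMF k n π x * (π i * g (x + Pi.single i 1)) := by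
    refine h.unique ?_
    convert h0.add (hasSum_sum (s := Finset.univ) fun i _ =>
      (summable_multPMF_mul n π fun x => π i * g (x + Pi.single i 1)).hasSum) using 1
    funext x
    rw [multOp_apply, mul_add, Finset.mul_sum]
  rw [ha]
  convert hsum using 1
  funext x
  have := multPMF_succ_none n π x
  have e : ∑ i, multPMF k (n + 1) π x * (x i / (n + 1)) * g x =
      multPMF k (n + 1) π x * ((∑ i, (x i : ℝ)) / (n + 1)) * g x := by
    rw [← Finset.sum_mul, ← Finset.mul_sum, ← Finset.sum_div]
  rw [e]
  field_simp
  linear_combination g x * this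

lemma hasSum_multPMF (n : ℕ) (π : Fin k → ℝ) (g : (Fin k → ℕ) → ℝ) :
    HasSum (fun x => multPMF k n π x * g x) ((multOp π)^[n] g 0) := by
  induction n generalizing g with
  | zero =>
    have h := hasSum_single (f := fun x => multPMF k 0 π x * g x) 0 fun x hx => by
      have : ¬ ∑ i, x i ≤ 0 := fun h => hx <| by
        funext i
        simpa using (Finset.sum_eq_zero_iff.1 (Nat.le_zero.1 h)) i (Finset.mem_univ i)
      simp only [multPMF, if_neg this, zero_mul]
    simpa [multPMF] using h
  | succ n ih => exact hasSum_multPMF_succ n π g (ih _)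

/-- The quadratic form `vᵀ Σ v` at `v = ∇g(x)` is `n` times the one-step variance of `g`. -/
lemma quadForm_multSigma (n : ℕ) (π : Fin k → ℝ) (g : (Fin k → ℕ) → ℝ) (x : Fin k → ℕ) :
    quadForm (multSigma k n π) (fun i => fd g i x) =
      n * stepVar (multStepProb π) multStep g x := by
  have hfd : ∀ i, g (x + Pi.single i 1) = g x + fd g i x := by
    intro i
    have : Function.update x i (x i + 1) = x + Pi.single i 1 := by
      funext j
      rcases eq_or_ne j i with rfl | hj <;> simp [*]
    simp [fd, this]
  have hS : ∀ i j, fd g i x * multSigma k n π i j * fd g j x =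
      (if i = j then n * (π i * fd g i x ^ 2) else 0) -
        n * ((π i * fd g i x) * (π j * fd g j x)) := by
    intro i j
    unfold multSigma
    split_ifs with h
    · subst h; ring
    · ring
  have hV := multOp_apply π (fun y => g y ^ 2) x
  have hM := multOp_apply π g x
  simp only [quadForm, hS, stepVar, hV, hM, hfd, Finset.sum_sub_distrib, Finset.sum_ite_eq,
    Finset.mem_univ, if_true, ← Finset.mul_sum, ← Finset.sum_mul]
  have e1 : ∑ i, π i * (g x + fd g i x) ^ 2 = (∑ i, π i) * g x ^ 2 +
      2 * g x * (∑ i, π i * fd g i x) + ∑ i, π i * fd g i x ^ 2 := by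
    rw [Finset.sum_mul, Finset.mul_sum, ← Finset.sum_add_distrib, ← Finset.sum_add_distrib]
    exact Finset.sum_congr rfl fun i _ => by ring
  have e2 : ∑ i, π i * (g x + fd g i x) = (∑ i, π i) * g x + ∑ i, π i * fd g i x := by
    rw [Finset.sum_mul, ← Finset.sum_add_distrib]
    exact Finset.sum_congr rfl fun i _ => by ring
  rw [e1, e2]
  ring

/-- The multinomial weight lowers the number of trials by one. -/
lemma multPMF_mul_multW (n : ℕ) (π : Fin k → ℝ) (hπ0 : 0 < 1 - ∑ i, π i) (x : Fin k → ℕ) :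
    multPMF k (n + 1) π x * multW k (n + 1) π x = multPMF k n π x := by
  have := multPMF_succ_none n π x
  have h0 := hπ0.ne'
  rw [multW, if_neg (Nat.succ_ne_zero n)]
  push_cast
  rw [← mul_div_assoc, this]
  field_simp

end Multinomial

/-- Chernoff-type upper variance bound for the multinomial distribution:
`Var g(X) ≤ E[w(X) ∇g(X)ᵀ Σ ∇g(X)]`. -/
theorem multinomial_variance_bound
    (k n : ℕ) (hk : 1 ≤ k) (π : Fin k → ℝ)
    (hπ : ∀ i, 0 < π i ∧ π i < 1) (hπ0 : 0 < 1 - ∑ i, π i)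
    (g : (Fin k → ℕ) → ℝ) :
    (∑' x : Fin k → ℕ,
        multPMF k n π x * (g x - ∑' y : Fin k → ℕ, multPMF k n π y * g y) ^ 2)
      ≤ ∑' x : Fin k → ℕ,
          multPMF k n π x *
            (multW k n π x * quadForm (multSigma k n π) (fun i => fd g i x)) := by
  have hq : ∀ o, 0 ≤ multStepProb π o := by
    rintro (_ | i)
    exacts [hπ0.le, (hπ i).1.le]
  have hq1 : ∑ o, multStepProb π o = 1 := by
    simp [Fintype.sum_option, multStepProb]
  have hL : (∑' x : Fin k → ℕ,
      multPMF k n π x * (g x - ∑' y : Fin k → ℕ, multPMF k n π y * g y) ^ 2) =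
      (multOp π)^[n] (fun y => g y ^ 2) 0 - (multOp π)^[n] g 0 ^ 2 := by
    rw [(hasSum_multPMF n π g).tsum_eq]
    set m := (multOp π)^[n] g 0
    have h1 := hasSum_multPMF n π fun _ => 1
    rw [stepOp_iterate_one hq1] at h1
    have h := ((hasSum_multPMF n π fun y => g y ^ 2).sub
      ((hasSum_multPMF n π g).mul_left (2 * m))).add (h1.mul_left (m ^ 2))
    refine (HasSum.tsum_eq ?_).trans
      (show (multOp π)^[n] (fun y => g y ^ 2) 0 - 2 * m * m + m ^ 2 * 1 = _ by ring)
    have e : (fun x => multPMF k n π x * (g x - m) ^ 2) = fun x => multPMF k n π x * g x ^ 2 -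
        2 * m * (multPMF k n π x * g x) + m ^ 2 * (multPMF k n π x * 1) := by
      funext x
      ring
    rw [e]
    exact h
  have hR : (∑' x : Fin k → ℕ, multPMF k n π x *
      (multW k n π x * quadForm (multSigma k n π) (fun i => fd g i x))) =
      n * (multOp π)^[n - 1] (stepVar (multStepProb π) multStep g) 0 := by
    cases n with
    | zero => simp [multW]
    | succ n =>
      rw [Nat.add_sub_cancel, ← (hasSum_multPMF n π _).tsum_eq, ← tsum_mul_left]
      refine tsum_congr fun x => ?_
      rw [← mul_assoc, multPMF_mul_multW n π hπ0, quadForm_multSigma]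
      ring
  rw [hL, hR]
  exact stepOp_efronStein hq hq1 n g 0
end

section
/- Let X = (X_1,…,X_k) follow the negative multinomial distribution NM_k(r,θ) with dispersion matrix Σ, and let g : ℕ^k → ℝ be a real function with Var g(X) < ∞. Then Var g(X) ≤ E[ w(X) · ∇g(X)ᵀ Σ ∇g(X) ], where w is the negative multinomial w-function, ∇g(x) = (Δ_1 g(x),…,Δ_k g(x))ᵀ is the vector of forward differences, and the right-hand side is understood as a value in [0,∞] (the inequality being trivial when it is infinite). -/
/-!
The bound is proved by induction on the dimension `k`, peeling off one coordinate at a time.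

In dimension one (`nb_variance_le`) the variance is half of `E (g X - g Y)²` with `X, Y`
independent. For `Y < X`, Cauchy–Schwarz gives `(g X - g Y)² ≤ (X - Y) Σ_{Y ≤ z < X} (Δ g z)²`;
after exchanging sums the weight of `(Δ g z)²` is `E[(X - Y) 1{Y ≤ z < X}]`, which equals
`t / (1 - t) * (m + z) * P(X = z)` for the negative binomial distribution (`nb_kernel`).

For the inductive step, write a point as `Fin.cons y x`. The tail `x` is negative multinomial with
parameters `tailParam θ`, and given `x` the head `y` is negative binomial with parameters
`r + Σ xᵢ` and `θ 0` (`negMultPMF_cons`). With `G x` the conditional mean of `g`, the variance is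
the mean conditional variance, bounded by dimension one, plus the variance of `G`, bounded by the
induction hypothesis. The differences of `G` are again conditional means, with the head parameter
raised by one: `Δᵢ G = E[Δᵢ g + θ₁ / (1 - θ₁) Δ₁ g]`, where `1` denotes the head coordinate
(`fd_condMean`). Jensen's inequality for the quadratic form `diffForm` moves this mean outside, and
the two contributions add up exactly to the form in dimension `k + 1` (`diffForm_succ`).

The induction only asserts the bound for the second moment about some centre `c`, since the mean
minimises the second moment (`tsum_sq_sub_eq`). Sums that may be infinite are taken in `[0, ∞]`.
-/

open scoped BigOperators ENNReal

/-- The p.m.f. of the negative multinomial distribution `NM_k(r, θ)` on `ℕ^k`. -/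
noncomputable def negMultPMF (k r : ℕ) (θ : Fin k → ℝ) (x : Fin k → ℕ) : ℝ :=
  (Nat.factorial (r + ∑ i, x i - 1) : ℝ) /
      ((∏ i, (Nat.factorial (x i) : ℝ)) * (Nat.factorial (r - 1) : ℝ)) *
    (∏ i, θ i ^ x i) * (1 - ∑ i, θ i) ^ r

/-- The negative multinomial `w`-function: `w(x) = θ₀ (r + Σ xᵢ) / r`. -/
noncomputable def negMultW (k r : ℕ) (θ : Fin k → ℝ) (x : Fin k → ℕ) : ℝ :=
  (1 - ∑ i, θ i) * ((r : ℝ) + ∑ i, (x i : ℝ)) / (r : ℝ)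

/-- The dispersion (covariance) matrix of the negative multinomial distribution. -/
noncomputable def negMultSigma (k r : ℕ) (θ : Fin k → ℝ) (i j : Fin k) : ℝ :=
  if i = j then (r : ℝ) * θ i * ((1 - ∑ s, θ s) + θ i) / (1 - ∑ s, θ s) ^ 2
  else (r : ℝ) * θ i * θ j / (1 - ∑ s, θ s) ^ 2

/-! ### Weighted sums -/

theorem HasSum.of_eq {ι : Type*} {f g : ι → ℝ} {a b : ℝ} (h : HasSum f a)
    (hfg : ∀ i, g i = f i) (hab : b = a) : HasSum g b := by
  rw [hab, funext hfg]; exact h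

theorem summable_of_tsum_ofReal_lt_top {ι : Type*} {f : ι → ℝ} (hf : ∀ i, 0 ≤ f i)
    (h : ∑' i, ENNReal.ofReal (f i) < ⊤) : Summable f := by
  have := ENNReal.summable_toReal h.ne
  simpa [ENNReal.toReal_ofReal (hf _)] using this

theorem summable_mul_of_sq {ι : Type*} {p f : ι → ℝ} (hp : ∀ i, 0 ≤ p i) (hs : Summable p)
    (h2 : Summable fun i => p i * f i ^ 2) : Summable fun i => p i * f i := by
  refine Summable.of_norm_bounded (hs.add h2) fun i => ?_
  rw [Real.norm_eq_abs, abs_mul, abs_of_nonneg (hp i), ← mul_one_add]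
  refine mul_le_mul_of_nonneg_left ?_ (hp i)
  rw [← sq_abs]
  nlinarith [sq_nonneg (|f i| - 1), abs_nonneg (f i)]

/-- Bias–variance decomposition: the second moment about `c` is the variance plus the square of
the distance from `c` to the mean. -/
theorem tsum_sq_sub_eq {ι : Type*} {p f : ι → ℝ} (hp : ∀ i, 0 ≤ p i) (hs : HasSum p 1)
    (h2 : Summable fun i => p i * f i ^ 2) (c : ℝ) :
    ∑' i, ENNReal.ofReal (p i * (f i - c) ^ 2) =
      ∑' i, ENNReal.ofReal (p i * (f i - ∑' j, p j * f j) ^ 2) +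
        ENNReal.ofReal ((∑' j, p j * f j - c) ^ 2) := by
  have h1 := (summable_mul_of_sq hp hs.summable h2).hasSum
  set a := ∑' j, p j * f j with ha
  have key : ∀ c : ℝ, HasSum (fun i => p i * (f i - c) ^ 2)
      (∑' i, p i * f i ^ 2 - 2 * c * a + c ^ 2 * 1) := by
    intro c
    exact ((h2.hasSum.sub (h1.mul_left (2 * c))).add (hs.mul_left (c ^ 2))).of_eq
      (fun i => by ring) rfl
  have nn : ∀ c i, 0 ≤ p i * (f i - c) ^ 2 := fun c i => mul_nonneg (hp i) (sq_nonneg _)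
  rw [← ENNReal.ofReal_tsum_of_nonneg (nn c) (key c).summable,
    ← ENNReal.ofReal_tsum_of_nonneg (nn a) (key a).summable,
    ← ENNReal.ofReal_add (tsum_nonneg (nn a)) (sq_nonneg _), (key c).tsum_eq, (key a).tsum_eq]
  congr 1
  ring

theorem ofReal_sq_mean_le {ι : Type*} {p f : ι → ℝ} (hp : ∀ i, 0 ≤ p i) (hs : HasSum p 1)
    (h2 : Summable fun i => p i * f i ^ 2) :
    ENNReal.ofReal ((∑' j, p j * f j) ^ 2) ≤ ∑' i, ENNReal.ofReal (p i * f i ^ 2) := by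
  have := tsum_sq_sub_eq hp hs h2 0
  simp only [sub_zero] at this
  rw [this]
  exact le_add_self

/-- The quadratic form `Σ θᵢ vᵢ² + (Σ θᵢ vᵢ)² / θ₀`, where `θ₀ = 1 - Σ θᵢ`. Up to the factor
`r + Σ xᵢ`, it is the form `w(x) vᵀ Σ v` of the negative multinomial distribution. -/
noncomputable def diffForm {k : ℕ} (θ v : Fin k → ℝ) : ℝ :=
  ∑ i, θ i * v i ^ 2 + (∑ i, θ i * v i) ^ 2 / (1 - ∑ i, θ i)

theorem diffForm_nonneg {k : ℕ} {θ : Fin k → ℝ} (hθ : ∀ i, 0 < θ i) (h0 : 0 < 1 - ∑ i, θ i)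
    (v : Fin k → ℝ) : 0 ≤ diffForm θ v :=
  add_nonneg (Finset.sum_nonneg fun i _ => mul_nonneg (hθ i).le (sq_nonneg _))
    (div_nonneg (sq_nonneg _) h0.le)

/-- Jensen's inequality for the convex function `diffForm θ`. -/
theorem diffForm_mean_le {ι : Type*} {k : ℕ} {θ : Fin k → ℝ} (hθ : ∀ i, 0 < θ i)
    (h0 : 0 < 1 - ∑ i, θ i) {p : ι → ℝ} (hp : ∀ i, 0 ≤ p i) (hs : HasSum p 1)
    {D : ι → Fin k → ℝ} {v : Fin k → ℝ} (hD : ∀ i, HasSum (fun j => p j * D j i) (v i)) :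
    ENNReal.ofReal (diffForm θ v) ≤ ∑' j, ENNReal.ofReal (p j * diffForm θ (D j)) := by
  have nn : ∀ j, 0 ≤ p j * diffForm θ (D j) :=
    fun j => mul_nonneg (hp j) (diffForm_nonneg hθ h0 _)
  rcases eq_or_ne (∑' j, ENNReal.ofReal (p j * diffForm θ (D j))) ⊤ with h | h
  · rw [h]; exact le_top
  have hsum := summable_of_tsum_ofReal_lt_top nn (lt_top_iff_ne_top.2 h)
  rw [← ENNReal.ofReal_tsum_of_nonneg nn hsum]
  refine ENNReal.ofReal_le_ofReal ?_
  -- Integrate the supporting affine function of `diffForm θ` at `v`.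
  set A := ∑ i, θ i * v i with hA
  have hlin : HasSum (fun j => p j * (∑ i, θ i * (2 * v i * D j i - v i ^ 2) +
      (2 * A * ∑ i, θ i * D j i - A ^ 2) / (1 - ∑ i, θ i))) (diffForm θ v) := by
    have e1 : HasSum (fun j => ∑ i, (θ i * (2 * v i)) * (p j * D j i))
        (∑ i, (θ i * (2 * v i)) * v i) := hasSum_sum fun i _ => (hD i).mul_left _
    have e2 : HasSum (fun j => ∑ i, θ i * (p j * D j i)) A :=
      hasSum_sum fun i _ => (hD i).mul_left _
    refine ((e1.sub (hs.mul_right (∑ i, θ i * v i ^ 2))).add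
      (((e2.mul_left (2 * A)).sub (hs.mul_right (A ^ 2))).div_const (1 - ∑ i, θ i))).of_eq
      (fun j => ?_) ?_
    · have h1 : ∑ i, θ i * (2 * v i) * (p j * D j i) =
          p j * ∑ i, θ i * (2 * v i * D j i) := by
        rw [Finset.mul_sum]; exact Finset.sum_congr rfl fun i _ => by ring
      have h2 : ∑ i, θ i * (p j * D j i) = p j * ∑ i, θ i * D j i := by
        rw [Finset.mul_sum]; exact Finset.sum_congr rfl fun i _ => by ring
      rw [h1, h2]
      simp only [mul_sub, Finset.sum_sub_distrib]
      ring
    · have h1 : ∑ i, θ i * (2 * v i) * v i = 2 * ∑ i, θ i * v i ^ 2 := by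
        rw [Finset.mul_sum]; exact Finset.sum_congr rfl fun i _ => by ring
      rw [h1, diffForm, ← hA]
      ring
  refine hasSum_le (fun j => mul_le_mul_of_nonneg_left ?_ (hp j)) hlin hsum.hasSum
  refine add_le_add (Finset.sum_le_sum fun i _ => mul_le_mul_of_nonneg_left ?_ (hθ i).le)
    (div_le_div_of_nonneg_right ?_ h0.le)
  · nlinarith [sq_nonneg (v i - D j i)]
  · nlinarith [sq_nonneg (A - ∑ i, θ i * D j i)]

/-! ### The negative binomial distribution -/

/-- The negative binomial weights `Γ(m + y) / (y! Γ(m)) t^y (1 - t)^m`, for an integer `m ≥ 1`. -/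
noncomputable def nb (m : ℕ) (t : ℝ) (y : ℕ) : ℝ :=
  (Nat.factorial (m + y - 1) : ℝ) / ((Nat.factorial y : ℝ) * (Nat.factorial (m - 1) : ℝ)) *
    t ^ y * (1 - t) ^ m

section NegBinomial

variable {m : ℕ} {t : ℝ}

theorem nb_pos (ht0 : 0 < t) (ht1 : t < 1) (y : ℕ) : 0 < nb m t y := by
  have : 0 < 1 - t := by linarith
  unfold nb
  positivity

theorem nb_hasSum (hm : 1 ≤ m) (ht0 : 0 < t) (ht1 : t < 1) : HasSum (nb m t) 1 := by
  obtain ⟨n, rfl⟩ : ∃ n, m = n + 1 := ⟨m - 1, by omega⟩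
  have h := (hasSum_choose_mul_geometric_of_norm_lt_one (𝕜 := ℝ) n (r := t)
    (by rw [Real.norm_eq_abs, abs_of_pos ht0]; exact ht1)).mul_right ((1 - t) ^ (n + 1))
  have h1 : 1 - t ≠ 0 := by linarith
  rw [one_div, inv_mul_cancel₀ (pow_ne_zero _ h1)] at h
  refine h.of_eq (fun y => ?_) rfl
  unfold nb
  congr 2
  have e : n + 1 + y - 1 = y + n := by omega
  rw [e, Nat.add_sub_cancel, ← Nat.add_choose_mul_factorial_mul_factorial y n]
  have := Nat.factorial_pos y
  have := Nat.factorial_pos n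
  push_cast
  field_simp

theorem nb_succ_right (hm : 1 ≤ m) (y : ℕ) :
    ((y : ℝ) + 1) * nb m t (y + 1) = t * (m + y) * nb m t y := by
  obtain ⟨n, rfl⟩ : ∃ n, m = n + 1 := ⟨m - 1, by omega⟩
  unfold nb
  have e : n + 1 + (y + 1) - 1 = (n + y) + 1 := by omega
  have e' : n + 1 + y - 1 = n + y := by omega
  rw [e, e', Nat.factorial_succ, Nat.factorial_succ]
  push_cast
  have := Nat.factorial_pos y
  have := Nat.factorial_pos (n + 1 - 1)
  field_simp
  ring

theorem nb_succ_left (hm : 1 ≤ m) (y : ℕ) :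
    (m : ℝ) * nb (m + 1) t y = (m + y) * (1 - t) * nb m t y := by
  obtain ⟨n, rfl⟩ : ∃ n, m = n + 1 := ⟨m - 1, by omega⟩
  unfold nb
  have e : n + 1 + 1 + y - 1 = (n + y) + 1 := by omega
  have e' : n + 1 + y - 1 = n + y := by omega
  rw [e, e', Nat.add_sub_cancel, Nat.add_sub_cancel, Nat.factorial_succ, Nat.factorial_succ]
  push_cast
  have := Nat.factorial_pos y
  have := Nat.factorial_pos n
  field_simp
  ring

theorem nb_hasSum_mul (hm : 1 ≤ m) (ht0 : 0 < t) (ht1 : t < 1) :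
    HasSum (fun y => nb m t y * ((m : ℝ) + y)) (m / (1 - t)) := by
  have h1 : 1 - t ≠ 0 := by linarith
  refine ((nb_hasSum (m := m + 1) (by omega) ht0 ht1).mul_left
    ((m : ℝ) / (1 - t))).of_eq (fun y => ?_) ?_
  · rw [div_mul_eq_mul_div, nb_succ_left hm]
    field_simp
  · ring

theorem nb_hasSum_mean (hm : 1 ≤ m) (ht0 : 0 < t) (ht1 : t < 1) :
    HasSum (fun y : ℕ => nb m t y * (y : ℝ)) (m * t / (1 - t)) := by
  have h1 : 1 - t ≠ 0 := by linarith
  refine ((nb_hasSum_mul hm ht0 ht1).sub ((nb_hasSum hm ht0 ht1).mul_left (m : ℝ))).of_eq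
    (fun y => ?_) ?_
  · ring
  · field_simp; ring

theorem nb_summable_sq (hm : 1 ≤ m) (ht0 : 0 < t) (ht1 : t < 1) :
    Summable (fun y => nb m t y * ((m : ℝ) + y) ^ 2) := by
  have h1 : 0 < 1 - t := by linarith
  have hm0 : (0 : ℝ) ≤ m := Nat.cast_nonneg m
  refine Summable.of_nonneg_of_le (fun y => mul_nonneg (nb_pos ht0 ht1 y).le (sq_nonneg _)) ?_
    ((nb_hasSum_mul (m := m + 1) (by omega) ht0 ht1).summable.mul_left ((m : ℝ) / (1 - t)))
  intro y
  have h := nb_succ_left (t := t) hm y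
  have e : (m : ℝ) / (1 - t) * (nb (m + 1) t y * (((m + 1 : ℕ) : ℝ) + y)) =
      nb m t y * ((m + y) * (m + 1 + y)) := by
    rw [div_mul_eq_mul_div, ← mul_assoc, h]
    push_cast
    field_simp
  rw [e]
  refine mul_le_mul_of_nonneg_left ?_ (nb_pos ht0 ht1 y).le
  have : (0 : ℝ) ≤ y := Nat.cast_nonneg y
  nlinarith

/-- The discrete covariance identity that makes the Chernoff bound sharp: the partial sums of
`(mean - y) * nb m t y` are an explicit multiple of the weights. -/
theorem nb_partial_sum (hm : 1 ≤ m) (ht1 : t < 1) (z : ℕ) :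
    ∑ y ∈ Finset.range (z + 1), (m * t / (1 - t) - y) * nb m t y =
      t / (1 - t) * (m + z) * nb m t z := by
  have h1 : 1 - t ≠ 0 := by linarith
  induction z with
  | zero => simp only [zero_add, Finset.sum_range_one, Nat.cast_zero]; ring
  | succ z ih =>
    rw [Finset.sum_range_succ, ih]
    have h := nb_succ_right (t := t) hm z
    have e : t / (1 - t) * (m + z) * nb m t z = ((z : ℝ) + 1) * nb m t (z + 1) / (1 - t) := by
      rw [h]; ring
    rw [e]
    push_cast
    field_simp
    ring

/-- The kernel in the pairwise form of the variance: with `X, Y` independent negative binomial,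
`E[(X - Y) 1{Y ≤ z < X}] = t / (1 - t) * (m + z) * nb m t z`. -/
theorem nb_kernel (hm : 1 ≤ m) (ht0 : 0 < t) (ht1 : t < 1) (z : ℕ) :
    ∑' x : ℕ, ∑' y : ℕ, (if y ≤ z ∧ z < x then
        ENNReal.ofReal (nb m t x * nb m t y * ((x : ℝ) - y)) else 0) =
      ENNReal.ofReal (t / (1 - t) * (m + z) * nb m t z) := by
  set F := ∑ y ∈ Finset.range (z + 1), nb m t y with hF
  set M := ∑ y ∈ Finset.range (z + 1), nb m t y * (y : ℝ) with hM
  have inner : ∀ x : ℕ, ∑' y : ℕ, (if y ≤ z ∧ z < x then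
      ENNReal.ofReal (nb m t x * nb m t y * ((x : ℝ) - y)) else 0) =
      ENNReal.ofReal (if z < x then nb m t x * (x * F - M) else 0) := by
    intro x
    by_cases hx : z < x
    · rw [tsum_eq_sum (s := Finset.range (z + 1))]
      · rw [if_pos hx, hF, hM, Finset.mul_sum, ← Finset.sum_sub_distrib, Finset.mul_sum,
          ENNReal.ofReal_sum_of_nonneg]
        · refine Finset.sum_congr rfl fun y hy => ?_
          rw [if_pos ⟨by simpa [Nat.lt_succ_iff] using hy, hx⟩]
          congr 1; ring
        · intro y hy
          have hyx : (y : ℝ) ≤ x := by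
            have := Finset.mem_range.1 hy
            exact_mod_cast (by omega : y ≤ x)
          have e : nb m t x * (x * nb m t y - nb m t y * y) =
            nb m t x * nb m t y * ((x : ℝ) - y) := by ring
          rw [e]
          exact mul_nonneg (mul_nonneg (nb_pos ht0 ht1 x).le (nb_pos ht0 ht1 y).le)
            (sub_nonneg.2 hyx)
      · intro y hy
        rw [if_neg]
        rintro ⟨h, -⟩
        exact hy (Finset.mem_range.2 (by omega))
    · simp [hx]
  simp_rw [inner]
  have nn : ∀ x : ℕ, 0 ≤ (if z < x then nb m t x * (x * F - M) else 0) := by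
    intro x
    split_ifs with hx
    · refine mul_nonneg (nb_pos ht0 ht1 x).le ?_
      rw [hF, hM, Finset.mul_sum, ← Finset.sum_sub_distrib]
      refine Finset.sum_nonneg fun y hy => ?_
      have hyx : (y : ℝ) ≤ x := by
        have := Finset.mem_range.1 hy
        exact_mod_cast (by omega : y ≤ x)
      have := (nb_pos (m := m) ht0 ht1 y).le
      nlinarith
    · exact le_rfl
  have hs : HasSum (fun x : ℕ => if z < x then nb m t x * (x * F - M) else 0)
      (m * t / (1 - t) * F - M) := by
    have h1 := ((nb_hasSum_mean hm ht0 ht1).mul_right F).sub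
      ((nb_hasSum hm ht0 ht1).mul_right M)
    have h2 : HasSum (fun x : ℕ => if z < x then 0 else nb m t x * (x * F - M))
        (∑ x ∈ Finset.range (z + 1), if z < x then 0 else nb m t x * (x * F - M)) := by
      refine hasSum_sum_of_ne_finset_zero fun x hx => ?_
      rw [if_pos]
      simpa [Nat.lt_succ_iff] using hx
    -- The terms `x ≤ z` cancel, because they add up to `M F - F M`.
    have h3 : (∑ x ∈ Finset.range (z + 1), if z < x then 0 else nb m t x * (x * F - M)) = 0 := by
      have : ∀ x ∈ Finset.range (z + 1), (if z < x then 0 else nb m t x * (x * F - M)) =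
          nb m t x * x * F - nb m t x * M := by
        intro x hx
        rw [if_neg (by have := Finset.mem_range.1 hx; omega)]
        ring
      rw [Finset.sum_congr rfl this, Finset.sum_sub_distrib, ← Finset.sum_mul, ← Finset.sum_mul,
        ← hF, ← hM]
      ring
    rw [h3] at h2
    refine (h1.sub h2).of_eq (fun x => ?_) ?_
    · split_ifs <;> ring
    · ring
  rw [← ENNReal.ofReal_tsum_of_nonneg nn hs.summable, hs.tsum_eq, ← nb_partial_sum hm ht1, hF, hM,
    Finset.mul_sum, ← Finset.sum_sub_distrib]
  congr 1
  exact Finset.sum_congr rfl fun y _ => by ring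

theorem sq_sub_le_of_lt (g : ℕ → ℝ) {x y : ℕ} (h : y < x) :
    (g x - g y) ^ 2 ≤ ((x : ℝ) - y) * ∑ z ∈ Finset.Ico y x, (g (z + 1) - g z) ^ 2 := by
  rw [← Finset.sum_Ico_sub g h.le]
  rw [← Nat.cast_sub h.le, ← Nat.card_Ico]
  exact sq_sum_le_card_mul_sum_sq

/-- Variance bound for the negative binomial distribution. -/
theorem nb_variance_le (hm : 1 ≤ m) (ht0 : 0 < t) (ht1 : t < 1) (g : ℕ → ℝ)
    (h2 : Summable fun y => nb m t y * g y ^ 2) :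
    ∑' x, ENNReal.ofReal (nb m t x * (g x - ∑' y, nb m t y * g y) ^ 2) ≤
      ∑' z : ℕ, ENNReal.ofReal
        (nb m t z * (t / (1 - t) * (m + z) * (g (z + 1) - g z) ^ 2)) := by
  have hp : ∀ y, 0 ≤ nb m t y := fun y => (nb_pos ht0 ht1 y).le
  have hs := nb_hasSum hm ht0 ht1
  have hs1 : ∑' y, ENNReal.ofReal (nb m t y) = 1 := by
    rw [← ENNReal.ofReal_tsum_of_nonneg hp hs.summable, hs.tsum_eq, ENNReal.ofReal_one]
  set a := ∑' y, nb m t y * g y with ha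
  set V := ∑' x, ENNReal.ofReal (nb m t x * (g x - a) ^ 2) with hV
  let F : ℕ → ℕ → ENNReal := fun x y => ENNReal.ofReal (nb m t x * nb m t y * (g x - g y) ^ 2)
  let H : ℕ → ℕ → ENNReal := fun x y => if y < x then F x y else 0
  have symm : ∑' y, ∑' x, F x y = 2 * V := by
    have : ∀ y, ∑' x, F x y = ENNReal.ofReal (nb m t y) * V +
        ENNReal.ofReal (nb m t y * (g y - a) ^ 2) := by
      intro y
      have e := tsum_sq_sub_eq hp hs h2 (g y)
      rw [← ha, ← hV] at e
      have e2 : ENNReal.ofReal (nb m t y * (g y - a) ^ 2) =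
          ENNReal.ofReal (nb m t y) * ENNReal.ofReal ((a - g y) ^ 2) := by
        rw [← ENNReal.ofReal_mul (hp y)]; congr 1; ring
      rw [e2, ← mul_add, ← e, ← ENNReal.tsum_mul_left]
      refine tsum_congr fun x => ?_
      rw [← ENNReal.ofReal_mul (hp y)]
      simp only [F]
      congr 1; ring
    simp_rw [this]
    rw [ENNReal.tsum_add, ENNReal.tsum_mul_right, hs1, one_mul, ← hV, two_mul]
  have split : ∀ x y, F x y = H x y + H y x := by
    intro x y
    rcases lt_trichotomy x y with h | h | h
    · simp only [H, if_pos h, if_neg h.not_gt, zero_add, F]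
      congr 1; ring
    · subst h; simp [H, F]
    · simp only [H, if_pos h, if_neg h.not_gt, add_zero]
  have hVH : V = ∑' x, ∑' y, H x y := by
    have h : 2 * V = 2 * ∑' x, ∑' y, H x y := by
      rw [← symm]
      simp_rw [split, ENNReal.tsum_add]
      rw [ENNReal.tsum_comm, two_mul]
    exact (ENNReal.mul_right_inj two_ne_zero (by simp)).1 h
  have bound : ∀ x y, H x y ≤ ∑' z : ℕ, ENNReal.ofReal ((g (z + 1) - g z) ^ 2) *
      (if y ≤ z ∧ z < x then ENNReal.ofReal (nb m t x * nb m t y * ((x : ℝ) - y)) else 0) := by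
    intro x y
    by_cases h : y < x
    · have hyx : (0 : ℝ) ≤ (x : ℝ) - y := sub_nonneg.2 (by exact_mod_cast h.le)
      have hpp : 0 ≤ nb m t x * nb m t y := mul_nonneg (hp x) (hp y)
      simp only [H, if_pos h, F]
      refine le_trans (ENNReal.ofReal_le_ofReal
        (mul_le_mul_of_nonneg_left (sq_sub_le_of_lt g h) hpp)) ?_
      rw [← mul_assoc, Finset.mul_sum, ENNReal.ofReal_sum_of_nonneg
        (fun z _ => mul_nonneg (mul_nonneg hpp hyx) (sq_nonneg _))]
      refine le_trans (Finset.sum_le_sum fun z hz => ?_)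
        (ENNReal.sum_le_tsum (Finset.Ico y x))
      rw [if_pos (Finset.mem_Ico.1 hz), ← ENNReal.ofReal_mul (sq_nonneg _), mul_comm]
    · simp [H, h]
  calc V = ∑' x, ∑' y, H x y := hVH
    _ ≤ ∑' x : ℕ, ∑' y : ℕ, ∑' z : ℕ, ENNReal.ofReal ((g (z + 1) - g z) ^ 2) *
      (if y ≤ z ∧ z < x then ENNReal.ofReal (nb m t x * nb m t y * ((x : ℝ) - y)) else 0) :=
        ENNReal.tsum_le_tsum fun x => ENNReal.tsum_le_tsum fun y => bound x y
    _ = ∑' x : ℕ, ∑' z : ℕ, ∑' y : ℕ, ENNReal.ofReal ((g (z + 1) - g z) ^ 2) *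
      (if y ≤ z ∧ z < x then ENNReal.ofReal (nb m t x * nb m t y * ((x : ℝ) - y)) else 0) :=
        tsum_congr fun x => ENNReal.tsum_comm
    _ = ∑' z : ℕ, ENNReal.ofReal ((g (z + 1) - g z) ^ 2) *
          ENNReal.ofReal (t / (1 - t) * (m + z) * nb m t z) := by
        rw [ENNReal.tsum_comm]
        simp_rw [ENNReal.tsum_mul_left, nb_kernel hm ht0 ht1]
    _ = _ := by
        refine tsum_congr fun z => ?_
        rw [← ENNReal.ofReal_mul (sq_nonneg _)]
        congr 1; ring

/-- Raising the parameter `m` by one: if `Y` is negative binomial with parameter `m` and `Z` with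
parameter `m + 1`, then `E h(Y) = E[h(Z) - t / (1 - t) * (h(Z + 1) - h(Z))]`. -/
theorem nb_shift (hm : 1 ≤ m) (ht0 : 0 < t) (ht1 : t < 1) (h : ℕ → ℝ)
    (h2 : Summable fun y => nb m t y * h y ^ 2) :
    HasSum (fun y => nb (m + 1) t y * (h y - t / (1 - t) * (h (y + 1) - h y)))
      (∑' y, nb m t y * h y) := by
  have hq : 1 - t ≠ 0 := by linarith
  have hm0 : (m : ℝ) ≠ 0 := by exact_mod_cast (by omega : m ≠ 0)
  have hp : ∀ y, 0 ≤ nb m t y := fun y => (nb_pos ht0 ht1 y).le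
  have s1 := summable_mul_of_sq hp (nb_hasSum hm ht0 ht1).summable h2
  -- Square integrability of both factors makes `(m + y) * h y` summable.
  have s2 : Summable fun y : ℕ => nb m t y * (((m : ℝ) + y) * h y) := by
    refine Summable.of_norm_bounded ((nb_summable_sq hm ht0 ht1).add h2) fun y => ?_
    rw [Real.norm_eq_abs, abs_mul, abs_of_nonneg (hp y), ← mul_add]
    refine mul_le_mul_of_nonneg_left ?_ (hp y)
    rw [abs_mul, ← sq_abs ((m : ℝ) + y), ← sq_abs (h y)]
    nlinarith [sq_nonneg (|(m : ℝ) + y| - |h y|), abs_nonneg ((m : ℝ) + y), abs_nonneg (h y)]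
  have s3 : Summable fun y : ℕ => (y : ℝ) * (nb m t y * h y) := by
    exact (s2.sub (s1.mul_left (m : ℝ))).congr fun y => by ring
  have s4 : HasSum (fun y : ℕ => ((y + 1 : ℕ) : ℝ) * (nb m t (y + 1) * h (y + 1)))
      (∑' y : ℕ, (y : ℝ) * (nb m t y * h y)) := by
    rw [hasSum_nat_add_iff (f := fun y : ℕ => (y : ℝ) * (nb m t y * h y)) 1]
    simpa using s3.hasSum
  have key := ((s1.hasSum.add (s3.hasSum.mul_left (1 / (m : ℝ)))).sub
    (s4.mul_left (1 / (m : ℝ))))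
  rw [add_sub_cancel_right] at key
  refine key.of_eq (fun y => ?_) rfl
  have e1 : nb (m + 1) t y = (m + y) * (1 - t) * nb m t y / m := by
    rw [← nb_succ_left hm]; field_simp
  have e2 := nb_succ_right (t := t) hm y
  have e3 : ((y + 1 : ℕ) : ℝ) * (nb m t (y + 1) * h (y + 1)) =
      t * (m + y) * nb m t y * h (y + 1) := by
    rw [← e2]; push_cast; ring
  rw [e3, e1]
  field_simp
  ring

end NegBinomial

/-! ### Peeling off one coordinate of the negative multinomial distribution -/

/-- Parameters of the marginal distribution of the coordinates other than the first. -/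
noncomputable def tailParam {k : ℕ} (θ : Fin (k + 1) → ℝ) (i : Fin k) : ℝ :=
  θ i.succ / (1 - θ 0)

section Peel

variable {k r : ℕ}

theorem negMultPMF_pos {θ : Fin k → ℝ} (hθ : ∀ i, 0 < θ i) (h0 : 0 < 1 - ∑ i, θ i)
    (x : Fin k → ℕ) : 0 < negMultPMF k r θ x := by
  have h1 : 0 < ∏ i, θ i ^ x i := Finset.prod_pos fun i _ => pow_pos (hθ i) _
  have h2 : (0 : ℝ) < ∏ i, (Nat.factorial (x i) : ℝ) :=
    Finset.prod_pos fun i _ => by positivity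
  unfold negMultPMF
  positivity

theorem head_lt_one {θ : Fin (k + 1) → ℝ} (hθ : ∀ i, 0 < θ i) (h0 : 0 < 1 - ∑ i, θ i) :
    θ 0 < 1 := by
  rw [Fin.sum_univ_succ] at h0
  have : 0 ≤ ∑ i : Fin k, θ i.succ := Finset.sum_nonneg fun i _ => (hθ _).le
  linarith

theorem tailParam_pos {θ : Fin (k + 1) → ℝ} (hθ : ∀ i, 0 < θ i) (h0 : 0 < 1 - ∑ i, θ i)
    (i : Fin k) : 0 < tailParam θ i :=
  div_pos (hθ _) (by linarith [head_lt_one hθ h0])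

theorem one_sub_sum_tailParam {θ : Fin (k + 1) → ℝ} (h1 : θ 0 < 1) :
    1 - ∑ i, tailParam θ i = (1 - ∑ i, θ i) / (1 - θ 0) := by
  have : 1 - θ 0 ≠ 0 := by linarith
  unfold tailParam
  rw [← Finset.sum_div, Fin.sum_univ_succ]
  field_simp
  ring

theorem one_sub_sum_tailParam_pos {θ : Fin (k + 1) → ℝ} (hθ : ∀ i, 0 < θ i)
    (h0 : 0 < 1 - ∑ i, θ i) : 0 < 1 - ∑ i, tailParam θ i := by
  rw [one_sub_sum_tailParam (head_lt_one hθ h0)]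
  exact div_pos h0 (by linarith [head_lt_one hθ h0])

/-- Given the remaining coordinates `x`, the first coordinate is negative binomial with
parameter `r + Σ xᵢ`. -/
theorem negMultPMF_cons (hr : 1 ≤ r) {θ : Fin (k + 1) → ℝ} (h1 : θ 0 < 1)
    (y : ℕ) (x : Fin k → ℕ) :
    negMultPMF (k + 1) r θ (Fin.cons y x) =
      negMultPMF k r (tailParam θ) x * nb (r + ∑ i, x i) (θ 0) y := by
  have hq : 1 - θ 0 ≠ 0 := by linarith
  unfold negMultPMF nb
  rw [one_sub_sum_tailParam h1]
  simp only [Fin.sum_univ_succ, Fin.prod_univ_succ, Fin.cons_zero, Fin.cons_succ, tailParam,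
    div_pow, Finset.prod_div_distrib, Finset.prod_pow_eq_pow_sum]
  have e : r + (y + ∑ i, x i) - 1 = r + ∑ i, x i + y - 1 := by omega
  rw [e, pow_add (1 - θ 0)]
  have h2 : (∏ i, (Nat.factorial (x i) : ℝ)) ≠ 0 :=
    Finset.prod_ne_zero_iff.2 fun i _ => by positivity
  have := Nat.factorial_pos (r + ∑ i, x i - 1)
  have := Nat.factorial_pos (r - 1)
  have := Nat.factorial_pos y
  field_simp

theorem tsum_cons (f : (Fin (k + 1) → ℕ) → ENNReal) :
    ∑' z, f z = ∑' x : Fin k → ℕ, ∑' y : ℕ, f (Fin.cons y x) := by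
  rw [← (Fin.consEquiv fun _ : Fin (k + 1) => ℕ).tsum_eq f, ENNReal.tsum_comm,
    ← ENNReal.tsum_prod]
  rfl

theorem tsum_negMultPMF_cons (hr : 1 ≤ r) {θ : Fin (k + 1) → ℝ} (hθ : ∀ i, 0 < θ i)
    (h0 : 0 < 1 - ∑ i, θ i) (f : (Fin (k + 1) → ℕ) → ℝ) :
    ∑' z, ENNReal.ofReal (negMultPMF (k + 1) r θ z * f z) =
      ∑' x : Fin k → ℕ, ENNReal.ofReal (negMultPMF k r (tailParam θ) x) *
        ∑' y : ℕ, ENNReal.ofReal (nb (r + ∑ i, x i) (θ 0) y * f (Fin.cons y x)) := by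
  rw [tsum_cons]
  refine tsum_congr fun x => ?_
  rw [← ENNReal.tsum_mul_left]
  refine tsum_congr fun y => ?_
  rw [negMultPMF_cons hr (head_lt_one hθ h0), mul_assoc, ENNReal.ofReal_mul
    (negMultPMF_pos (tailParam_pos hθ h0) (one_sub_sum_tailParam_pos hθ h0) x).le]

theorem tsum_ofReal_nb {m : ℕ} {t : ℝ} (hm : 1 ≤ m) (ht0 : 0 < t) (ht1 : t < 1) :
    ∑' y, ENNReal.ofReal (nb m t y) = 1 := by
  rw [← ENNReal.ofReal_tsum_of_nonneg (fun y => (nb_pos ht0 ht1 y).le)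
    (nb_hasSum hm ht0 ht1).summable, (nb_hasSum hm ht0 ht1).tsum_eq, ENNReal.ofReal_one]

theorem tsum_ofReal_negMultPMF (hr : 1 ≤ r) {θ : Fin k → ℝ} (hθ : ∀ i, 0 < θ i)
    (h0 : 0 < 1 - ∑ i, θ i) : ∑' x, ENNReal.ofReal (negMultPMF k r θ x) = 1 := by
  induction k with
  | zero =>
    rw [tsum_eq_single default fun b hb => absurd (Subsingleton.elim b default) hb]
    simp [negMultPMF, div_self (Nat.cast_ne_zero (R := ℝ).2 (Nat.factorial_ne_zero (r - 1)))]
  | succ k ih =>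
    have h := tsum_negMultPMF_cons hr hθ h0 (fun _ => 1)
    simp only [mul_one] at h
    rw [h, ← ih (tailParam_pos hθ h0) (one_sub_sum_tailParam_pos hθ h0)]
    refine tsum_congr fun x => ?_
    rw [tsum_ofReal_nb (by omega) (hθ 0) (head_lt_one hθ h0), mul_one]

theorem negMultPMF_hasSum (hr : 1 ≤ r) {θ : Fin k → ℝ} (hθ : ∀ i, 0 < θ i)
    (h0 : 0 < 1 - ∑ i, θ i) : HasSum (negMultPMF k r θ) 1 := by
  have nn : ∀ x, 0 ≤ negMultPMF k r θ x := fun x => (negMultPMF_pos hθ h0 x).le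
  have h := tsum_ofReal_negMultPMF hr hθ h0
  have hs := summable_of_tsum_ofReal_lt_top nn (by rw [h]; exact ENNReal.one_lt_top)
  rw [← ENNReal.ofReal_tsum_of_nonneg nn hs, ENNReal.ofReal_eq_one] at h
  rw [← h]
  exact hs.hasSum

/-- The algebraic identity behind the induction on the dimension: the conditional and the
marginal contribution to the bound add up exactly to the form of dimension `k + 1`. -/
theorem diffForm_succ {θ : Fin (k + 1) → ℝ} (h1 : θ 0 < 1) (h0 : 0 < 1 - ∑ i, θ i)
    (v : Fin (k + 1) → ℝ) :
    θ 0 / (1 - θ 0) * v 0 ^ 2 + (1 - θ 0) *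
        diffForm (tailParam θ) (fun i => v i.succ + θ 0 / (1 - θ 0) * v 0) =
      diffForm θ v := by
  unfold diffForm
  rw [one_sub_sum_tailParam h1]
  rw [Fin.sum_univ_succ] at h0
  simp only [Fin.sum_univ_succ, tailParam]
  set t := θ 0
  set w := v 0
  set A := ∑ i : Fin k, θ i.succ * v i.succ with hA
  set B := ∑ i : Fin k, θ i.succ with hB
  set C := ∑ i : Fin k, θ i.succ * v i.succ ^ 2 with hC
  have hq : 1 - t ≠ 0 := by linarith
  have e1 : ∑ i : Fin k, θ i.succ / (1 - t) * (v i.succ + t / (1 - t) * w) ^ 2 =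
      (C + 2 * (t / (1 - t) * w) * A + (t / (1 - t) * w) ^ 2 * B) / (1 - t) := by
    rw [hA, hB, hC, Finset.mul_sum, Finset.mul_sum, ← Finset.sum_add_distrib,
      ← Finset.sum_add_distrib, Finset.sum_div]
    exact Finset.sum_congr rfl fun i _ => by ring
  have e2 : ∑ i : Fin k, θ i.succ / (1 - t) * (v i.succ + t / (1 - t) * w) =
      (A + t / (1 - t) * w * B) / (1 - t) := by
    rw [hA, hB, Finset.mul_sum, ← Finset.sum_add_distrib, Finset.sum_div]
    exact Finset.sum_congr rfl fun i _ => by ring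
  rw [e1, e2]
  have hz : 1 - (t + B) ≠ 0 := h0.ne'
  field_simp
  ring

theorem sum_update_succ (x : Fin k → ℕ) (i : Fin k) :
    ∑ j, Function.update x i (x i + 1) j = ∑ j, x j + 1 := by
  rw [Finset.sum_update_of_mem (Finset.mem_univ i),
    ← Finset.add_sum_erase _ _ (Finset.mem_univ i), Finset.sdiff_singleton_eq_erase]
  omega

/-- Differences of the conditional expectation `G` are conditional expectations, at the next
parameter `m + 1`, of a combination of differences of `g`. -/
theorem fd_condMean {t : ℝ} (hr : 1 ≤ r) (ht0 : 0 < t) (ht1 : t < 1)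
    (g : (Fin (k + 1) → ℕ) → ℝ)
    (hg : ∀ x : Fin k → ℕ,
      Summable fun y : ℕ => nb (r + ∑ i, x i) t y * g (Fin.cons y x) ^ 2)
    (x : Fin k → ℕ) (i : Fin k) :
    HasSum (fun y : ℕ => nb (r + ∑ i, x i + 1) t y *
        (fd g i.succ (Fin.cons y x) + t / (1 - t) * fd g 0 (Fin.cons y x)))
      (fd (fun x : Fin k → ℕ => ∑' y : ℕ, nb (r + ∑ i, x i) t y * g (Fin.cons y x)) i x) := by
  have hm : 1 ≤ r + ∑ i, x i := by omega
  have h1 := nb_shift hm ht0 ht1 _ (hg x)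
  have hx := hg (Function.update x i (x i + 1))
  have h2 := (summable_mul_of_sq (fun y => (nb_pos ht0 ht1 y).le)
    (nb_hasSum (by omega) ht0 ht1).summable hx).hasSum
  have e : r + ∑ j, Function.update x i (x i + 1) j = r + ∑ j, x j + 1 := by
    rw [sum_update_succ]; ring
  refine (h2.sub h1).of_eq (fun y => ?_) rfl
  rw [e]
  simp only [fd, Fin.cons_zero, Fin.cons_succ, Fin.update_cons_zero, ← Fin.cons_update]
  ring

end Peel

/-! ### The variance bound -/

/-- The variance bound, with an unspecified centre in place of the mean. The dimension `0` is
included as the base of the induction. -/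
theorem exists_center_le {k r : ℕ} (hr : 1 ≤ r) {θ : Fin k → ℝ} (hθ : ∀ i, 0 < θ i)
    (h0 : 0 < 1 - ∑ i, θ i) (g : (Fin k → ℕ) → ℝ)
    (hg : ∑' x, ENNReal.ofReal (negMultPMF k r θ x * g x ^ 2) < ⊤) :
    ∃ c : ℝ, ∑' x, ENNReal.ofReal (negMultPMF k r θ x * (g x - c) ^ 2) ≤
      ∑' x, ENNReal.ofReal (negMultPMF k r θ x *
        (((r : ℝ) + (∑ i, x i : ℕ)) * diffForm θ (fun i => fd g i x))) := by
  induction k with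
  | zero =>
    refine ⟨g default, ?_⟩
    rw [tsum_eq_single default fun b hb => absurd (Subsingleton.elim b default) hb]
    simp
  | succ k ih =>
    have ht0 := hθ 0
    have ht1 := head_lt_one hθ h0
    have hq : 0 < 1 - θ 0 := by linarith
    have hP := fun x => negMultPMF_pos (r := r) (tailParam_pos hθ h0)
      (one_sub_sum_tailParam_pos hθ h0) x
    have hm : ∀ x : Fin k → ℕ, 1 ≤ r + ∑ i, x i := fun x => by omega
    have hp : ∀ (x : Fin k → ℕ) (y : ℕ), 0 ≤ nb (r + ∑ i, x i) (θ 0) y :=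
      fun x y => (nb_pos ht0 ht1 y).le
    rw [tsum_negMultPMF_cons hr hθ h0 (fun z => g z ^ 2)] at hg
    have hgx : ∀ x : Fin k → ℕ,
        Summable fun y : ℕ => nb (r + ∑ i, x i) (θ 0) y * g (Fin.cons y x) ^ 2 := by
      intro x
      refine summable_of_tsum_ofReal_lt_top (fun y => mul_nonneg (hp x y) (sq_nonneg _)) ?_
      exact ENNReal.lt_top_of_mul_ne_top_right (ENNReal.ne_top_of_tsum_ne_top hg.ne x)
        (ENNReal.ofReal_pos.2 (hP x)).ne'
    let G : (Fin k → ℕ) → ℝ :=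
      fun x => ∑' y : ℕ, nb (r + ∑ i, x i) (θ 0) y * g (Fin.cons y x)
    have hG : ∑' x, ENNReal.ofReal (negMultPMF k r (tailParam θ) x * G x ^ 2) < ⊤ := by
      refine lt_of_le_of_lt (ENNReal.tsum_le_tsum fun x => ?_) hg
      rw [ENNReal.ofReal_mul (hP x).le]
      gcongr
      exact ofReal_sq_mean_le (hp x) (nb_hasSum (hm x) ht0 ht1) (hgx x)
    obtain ⟨c, hc⟩ := ih (tailParam_pos hθ h0) (one_sub_sum_tailParam_pos hθ h0) G hG
    refine ⟨c, ?_⟩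
    -- The contribution of the variance of the conditional mean, bounded fibrewise by Jensen.
    have jensen : ∀ x : Fin k → ℕ,
        ENNReal.ofReal (((r : ℝ) + (∑ i, x i : ℕ)) *
          diffForm (tailParam θ) (fun i => fd G i x)) ≤
        ∑' y : ℕ, ENNReal.ofReal (nb (r + ∑ i, x i) (θ 0) y *
          (((r + ∑ i, x i : ℕ) + y : ℝ) * ((1 - θ 0) * diffForm (tailParam θ) (fun i =>
            fd g i.succ (Fin.cons y x) + θ 0 / (1 - θ 0) * fd g 0 (Fin.cons y x))))) := by
      intro x
      have h := diffForm_mean_le (tailParam_pos hθ h0) (one_sub_sum_tailParam_pos hθ h0)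
        (fun y => (nb_pos ht0 ht1 y).le) (nb_hasSum (by omega) ht0 ht1)
        (D := fun (y : ℕ) i =>
          fd g i.succ (Fin.cons y x) + θ 0 / (1 - θ 0) * fd g 0 (Fin.cons y x))
        (fun i => fd_condMean hr ht0 ht1 g hgx x i)
      have hrx : (0 : ℝ) ≤ (r : ℝ) + (∑ i, x i : ℕ) := by positivity
      rw [ENNReal.ofReal_mul hrx]
      refine (mul_le_mul_right h _).trans (le_of_eq ?_)
      rw [← ENNReal.tsum_mul_left]
      refine tsum_congr fun y => ?_
      rw [← ENNReal.ofReal_mul hrx, ← mul_assoc]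
      have e := nb_succ_left (t := θ 0) (hm x) y
      rw [Nat.cast_add r] at e
      rw [e]
      congr 1
      push_cast
      ring
    rw [tsum_negMultPMF_cons hr hθ h0 (fun z => (g z - c) ^ 2),
      tsum_negMultPMF_cons hr hθ h0 (fun z => ((r : ℝ) + (∑ i, z i : ℕ)) *
        diffForm θ (fun i => fd g i z))]
    calc _ = ∑' x : Fin k → ℕ, ENNReal.ofReal (negMultPMF k r (tailParam θ) x) *
            ∑' y : ℕ, ENNReal.ofReal (nb (r + ∑ i, x i) (θ 0) y *
              (g (Fin.cons y x) - G x) ^ 2) +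
          ∑' x, ENNReal.ofReal (negMultPMF k r (tailParam θ) x * (G x - c) ^ 2) := by
          rw [← ENNReal.tsum_add]
          refine tsum_congr fun x => ?_
          rw [tsum_sq_sub_eq (hp x) (nb_hasSum (hm x) ht0 ht1) (hgx x) c, mul_add,
            ENNReal.ofReal_mul (hP x).le]
      _ ≤ ∑' x : Fin k → ℕ, ENNReal.ofReal (negMultPMF k r (tailParam θ) x) *
            ∑' y : ℕ, ENNReal.ofReal (nb (r + ∑ i, x i) (θ 0) y *
              (θ 0 / (1 - θ 0) * ((r + ∑ i, x i : ℕ) + y) *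
                (g (Fin.cons (y + 1) x) - g (Fin.cons y x)) ^ 2)) +
          ∑' x : Fin k → ℕ, ENNReal.ofReal (negMultPMF k r (tailParam θ) x) *
            ∑' y : ℕ, ENNReal.ofReal (nb (r + ∑ i, x i) (θ 0) y *
              (((r + ∑ i, x i : ℕ) + y : ℝ) * ((1 - θ 0) * diffForm (tailParam θ) (fun i =>
                fd g i.succ (Fin.cons y x) +
                  θ 0 / (1 - θ 0) * fd g 0 (Fin.cons y x))))) := by
          refine add_le_add (ENNReal.tsum_le_tsum fun x => ?_)
            (hc.trans (ENNReal.tsum_le_tsum fun x => ?_))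
          · refine mul_le_mul_right ?_ _
            exact nb_variance_le (hm x) ht0 ht1 (fun y : ℕ => g (Fin.cons y x)) (hgx x)
          · rw [ENNReal.ofReal_mul (hP x).le]
            exact mul_le_mul_right (jensen x) _
      _ = _ := by
          rw [← ENNReal.tsum_add]
          refine tsum_congr fun x => ?_
          rw [← mul_add, ← ENNReal.tsum_add]
          congr 1
          refine tsum_congr fun y => ?_
          have hD := diffForm_nonneg (tailParam_pos hθ h0) (one_sub_sum_tailParam_pos hθ h0)
            (fun i => fd g i.succ (Fin.cons y x) + θ 0 / (1 - θ 0) * fd g 0 (Fin.cons y x))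
          have hpy := hp x y
          rw [← ENNReal.ofReal_add (by positivity) (by positivity),
            ← diffForm_succ ht1 h0 (fun i => fd g i (Fin.cons y x))]
          congr 1
          have e : fd g 0 (Fin.cons y x) = g (Fin.cons (y + 1) x) - g (Fin.cons y x) := by
            simp only [fd, Fin.cons_zero, Fin.update_cons_zero]
          rw [← e, Fin.sum_univ_succ]
          simp only [Fin.cons_zero, Fin.cons_succ]
          push_cast
          ring

/-- The weighted dispersion form of the statement is `(r + Σ xᵢ) * diffForm θ`. -/
theorem negMultW_mul_quadForm {k r : ℕ} (hr : 1 ≤ r) {θ : Fin k → ℝ}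
    (h0 : 0 < 1 - ∑ i, θ i) (x : Fin k → ℕ) (v : Fin k → ℝ) :
    negMultW k r θ x * quadForm (negMultSigma k r θ) v =
      ((r : ℝ) + (∑ i, x i : ℕ)) * diffForm θ v := by
  have hr0 : (r : ℝ) ≠ 0 := by exact_mod_cast (by omega : r ≠ 0)
  unfold negMultW quadForm negMultSigma diffForm
  set q := 1 - ∑ i, θ i
  have hq : q ≠ 0 := h0.ne'
  have e : ∀ i j, v i * (if i = j then (r : ℝ) * θ i * (q + θ i) / q ^ 2
      else (r : ℝ) * θ i * θ j / q ^ 2) * v j =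
      (if i = j then r / q * (θ i * v i ^ 2) else 0) +
        r / q ^ 2 * ((θ i * v i) * (θ j * v j)) := by
    intro i j
    split_ifs with h
    · subst h; field_simp
    · ring
  simp only [e, Finset.sum_add_distrib, Finset.sum_ite_eq, Finset.mem_univ, if_true,
    ← Finset.mul_sum, ← Finset.sum_mul]
  push_cast
  field_simp

/-- Chernoff-type upper variance bound for the negative multinomial distribution:
if `Var g(X) < ∞`, then `Var g(X) ≤ E[w(X) ∇g(X)ᵀ Σ ∇g(X)]`, the right-hand side being a
value in `[0, ∞]`. -/
theorem negative_multinomial_variance_bound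
    (k r : ℕ) (hk : 1 ≤ k) (hr : 1 ≤ r) (θ : Fin k → ℝ)
    (hθ : ∀ i, 0 < θ i ∧ θ i < 1) (hθ0 : 0 < 1 - ∑ i, θ i)
    (g : (Fin k → ℕ) → ℝ)
    (hVar : (∑' x : Fin k → ℕ,
        ENNReal.ofReal
          (negMultPMF k r θ x * (g x - ∑' y : Fin k → ℕ, negMultPMF k r θ y * g y) ^ 2)) < ⊤) :
    (∑' x : Fin k → ℕ,
        ENNReal.ofReal
          (negMultPMF k r θ x * (g x - ∑' y : Fin k → ℕ, negMultPMF k r θ y * g y) ^ 2))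
      ≤ ∑' x : Fin k → ℕ,
          ENNReal.ofReal
            (negMultPMF k r θ x *
              (negMultW k r θ x * quadForm (negMultSigma k r θ) (fun i => fd g i x))) := by
  have hpos : ∀ i, 0 < θ i := fun i => (hθ i).1
  have hp : ∀ x, 0 ≤ negMultPMF k r θ x := fun x => (negMultPMF_pos hpos hθ0 x).le
  have hs := negMultPMF_hasSum hr hpos hθ0
  -- A finite second moment about any point, even a junk value of the mean, gives `g ∈ L²`.
  have hg2 : Summable fun x => negMultPMF k r θ x * g x ^ 2 := by
    have h := summable_of_tsum_ofReal_lt_top (fun x => mul_nonneg (hp x) (sq_nonneg _)) hVar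
    set a := ∑' y : Fin k → ℕ, negMultPMF k r θ y * g y
    refine Summable.of_nonneg_of_le (fun x => mul_nonneg (hp x) (sq_nonneg _)) (fun x => ?_)
      ((h.mul_left 2).add (hs.summable.mul_left (2 * a ^ 2)))
    nlinarith [mul_nonneg (hp x) (sq_nonneg (g x - 2 * a))]
  have hg : ∑' x, ENNReal.ofReal (negMultPMF k r θ x * g x ^ 2) < ⊤ := by
    rw [← ENNReal.ofReal_tsum_of_nonneg (fun x => mul_nonneg (hp x) (sq_nonneg _)) hg2]
    exact ENNReal.ofReal_lt_top
  obtain ⟨c, hc⟩ := exists_center_le hr hpos hθ0 g hg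
  simp_rw [negMultW_mul_quadForm hr hθ0]
  refine le_trans ?_ hc
  rw [tsum_sq_sub_eq hp hs hg2 c]
  exact le_self_add
end
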